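/- Let n ≥ 3, 2 ≤ j ≤ ⌈n/2⌉, δ = (1 2), r = (1 2 … n) in S_n, and dist the word metric with respect to {δ, r, r^{-1}}. Let π ∈ S_n and let ξ reverse the first j entries of π's one-line notation. Then dist(π r^{j-2}, ξ r^{⌈j/2⌉ - 1}) = j(j-1) - 1. -/

import Mathlib

/-- The transposition `δ = (1 2)` in `S_n` (0-indexed: swaps `0` and `1`). -/
def delta (n : ℕ) (hn : 2 ≤ n) : Equiv.Perm (Fin n) :=
  Equiv.swap ⟨0, by omega⟩ ⟨1, by omega⟩

/-- The symmetric generating set `{(1 2), (1 2 … n), (1 n … 2)}` of `S_n`. -/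
def gens (n : ℕ) (hn : 2 ≤ n) : Set (Equiv.Perm (Fin n)) :=
  {delta n hn, finRotate n, (finRotate n)⁻¹}

/-- `IsMinWordLen n hn g d` says that `d` is the minimal length of a word in the
generators `{(1 2), (1 2 … n), (1 n … 2)}` whose product is `g`; i.e. the distance
in the Cayley graph from `1` to `g` is exactly `d`. -/
def IsMinWordLen (n : ℕ) (hn : 2 ≤ n) (g : Equiv.Perm (Fin n)) (d : ℕ) : Prop :=
  (∃ l : List (Equiv.Perm (Fin n)),
      (∀ x ∈ l, x ∈ gens n hn) ∧ l.prod = g ∧ l.length = d) ∧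
  (∀ l : List (Equiv.Perm (Fin n)),
      (∀ x ∈ l, x ∈ gens n hn) → l.prod = g → d ≤ l.length)

/-!
Lift `S_n` to the extended affine symmetric group. The rotation `r` lifts to an element of Coxeter
length `0` and `δ` to a simple reflection, so along a word only the letters `δ` can increase the
least Coxeter length of a lift, each by at most `1`. As `δ² = 1`, a word of `d` letters gains at
most `(d + 1) / 2`. It remains to see that every lift of the reversal of `j ≤ ⌈n/2⌉` entries has
length at least `j.choose 2`. Let `w` be the translation part of the lift. A pair `a < b` of
reversed entries costs `|w b - w a - 1|`, a reversed entry `a` and an unmoved entry `c` cost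
`|w c - w a|`, and `1 ≤ |w b - w a - 1| + |w c - w a| + |w c - w b|`; averaging over the `n - j`
unmoved entries, of which there are at least `j - 1`, gives the bound.

Conversely, conjugating `δ` by powers of `r` gives adjacent transpositions, from these one builds
the transposition of positions `o` and `o + d + 1` in `4 * d + 1` letters, and nesting
`⌊j/2⌋` such transpositions, from the outermost inwards, reverses `j` entries in
`j * (j - 1) - 1` letters.
-/

section CayleyWalk

variable {G : Type*} [Group G] {S : Set G} {g h k : G} {d e : ℕ}

/-- There is a walk of length `d` from `g` to `h` in the right Cayley graph of `G` with respect
to `S`, encoded as the word of its edge labels; used to concatenate and translate words. -/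
def HasCayleyWalk (S : Set G) (g h : G) (d : ℕ) : Prop :=
  ∃ l : List G, (∀ s ∈ l, s ∈ S) ∧ g * l.prod = h ∧ l.length = d

lemma hasCayleyWalk_mul_right {s : G} (hs : s ∈ S) (g : G) : HasCayleyWalk S g (g * s) 1 :=
  ⟨[s], by simpa using hs, by simp, rfl⟩

lemma HasCayleyWalk.trans (h₁ : HasCayleyWalk S g h d) (h₂ : HasCayleyWalk S h k e) :
    HasCayleyWalk S g k (d + e) := by
  obtain ⟨l₁, hl₁, rfl, rfl⟩ := h₁
  obtain ⟨l₂, hl₂, rfl, rfl⟩ := h₂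
  refine ⟨l₁ ++ l₂, fun s hs => ?_, by rw [List.prod_append, mul_assoc], List.length_append⟩
  exact (List.mem_append.1 hs).elim (hl₁ s) (hl₂ s)

lemma hasCayleyWalk_mul_left_iff (u : G) :
    HasCayleyWalk S (u * g) (u * h) d ↔ HasCayleyWalk S g h d := by
  simp only [HasCayleyWalk, mul_assoc, mul_right_inj]

lemma HasCayleyWalk.mul_left (hw : HasCayleyWalk S g h d) (u : G) :
    HasCayleyWalk S (u * g) (u * h) d :=
  (hasCayleyWalk_mul_left_iff u).2 hw

end CayleyWalk

lemma isMinWordLen_inv_mul_iff {n : ℕ} {hn : 2 ≤ n} {g h : Equiv.Perm (Fin n)} {d : ℕ} :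
    IsMinWordLen n hn (g⁻¹ * h) d ↔ HasCayleyWalk (gens n hn) g h d ∧
      ∀ e, HasCayleyWalk (gens n hn) g h e → d ≤ e := by
  simp only [IsMinWordLen, HasCayleyWalk, eq_inv_mul_iff_mul_eq]
  refine and_congr_right' ⟨?_, fun H l hl hprod => H _ ⟨l, hl, hprod, rfl⟩⟩
  rintro H _ ⟨l, hl, hprod, rfl⟩
  exact H l hl hprod

section Rotation

variable {n : ℕ}

lemma val_finRotate (p : Fin n) :
    (finRotate n p : ℕ) = if (p : ℕ) + 1 = n then 0 else (p : ℕ) + 1 := by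
  cases n with
  | zero => exact p.elim0
  | succ m => simp only [coe_finRotate, Fin.ext_iff, Fin.val_last, Nat.add_right_cancel_iff]

lemma val_finRotate_pow {k : ℕ} {p : Fin n} (h : (p : ℕ) + k < n) :
    ((finRotate n ^ k) p : ℕ) = p + k := by
  induction k with
  | zero => simp
  | succ k ih =>
    rw [pow_succ', Equiv.Perm.mul_apply, val_finRotate, ih (by omega), if_neg (by omega), add_assoc]

end Rotation

section Reversal

variable {n : ℕ}

lemma val_swap (a b p : Fin n) :
    (Equiv.swap a b p : ℕ) = if (p : ℕ) = a then (b : ℕ) else if (p : ℕ) = b then a else p := by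
  simp only [Equiv.swap_apply_def, Fin.ext_iff, apply_ite Fin.val]

/-- The permutation of `Fin n` reversing the block of positions `a, …, b`, and the identity if
`b < a`; right multiplication by it reverses that block of a one-line notation. -/
def reverseIcc (a b : Fin n) : Equiv.Perm (Fin n) :=
  Function.Involutive.toPerm
    (fun p => if h : a ≤ p ∧ p ≤ b then ⟨a + b - p, by omega⟩ else p) fun p => by grind

lemma val_reverseIcc (a b p : Fin n) :
    (reverseIcc a b p : ℕ) = if a ≤ p ∧ p ≤ b then (a + b - p : ℕ) else p := by
  simp only [reverseIcc, Function.Involutive.toPerm, Equiv.coe_fn_mk, apply_dite Fin.val,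
    dite_eq_ite]

lemma reverseIcc_inv (a b : Fin n) : (reverseIcc a b)⁻¹ = reverseIcc a b := rfl

lemma reverseIcc_lt_reverseIcc_iff {a b p q : Fin n} (hpq : p < q) :
    reverseIcc a b q < reverseIcc a b p ↔ a ≤ p ∧ q ≤ b := by
  rw [Fin.lt_def, val_reverseIcc, val_reverseIcc]
  split_ifs <;> omega

lemma reverseIcc_eq_swap {a b : Fin n} (hab : a ≤ b) (hba : (b : ℕ) ≤ a + 2) :
    reverseIcc a b = Equiv.swap a b := by
  ext p
  rw [val_reverseIcc, val_swap]
  split_ifs <;> omega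

lemma swap_mul_reverseIcc {a b a' b' : Fin n} (hab : a < b) (ha : (a' : ℕ) = a + 1)
    (hb : (b : ℕ) = b' + 1) : Equiv.swap a b * reverseIcc a' b' = reverseIcc a b := by
  ext p
  rw [Equiv.Perm.mul_apply, val_swap, val_reverseIcc, val_reverseIcc]
  split_ifs <;> omega

lemma eq_mul_reverseIcc {j : ℕ} (hj : 0 < j) (hjn : j ≤ n) {π ξ : Equiv.Perm (Fin n)}
    (hξ : ∀ p : Fin n, ξ p =
      if h : (p : ℕ) < j then π ⟨j - 1 - (p : ℕ), by omega⟩ else π p) :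
    ξ = π * reverseIcc ⟨0, by omega⟩ ⟨j - 1, by omega⟩ := by
  ext p
  rw [hξ, Equiv.Perm.mul_apply, ← apply_dite (f := π)]
  congr 2
  ext
  rw [val_reverseIcc]
  split_ifs <;> grind

end Reversal

section UpperBound

variable {n : ℕ} {hn : 2 ≤ n}

lemma hasCayleyWalk_finRotate_pow_succ (k : ℕ) :
    HasCayleyWalk (gens n hn) (finRotate n ^ k) (finRotate n ^ (k + 1)) 1 := by
  rw [pow_succ]
  exact hasCayleyWalk_mul_right (by simp [gens]) _

lemma hasCayleyWalk_finRotate_pow_succ_symm (k : ℕ) :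
    HasCayleyWalk (gens n hn) (finRotate n ^ (k + 1)) (finRotate n ^ k) 1 := by
  simpa only [pow_succ, mul_inv_cancel_right] using
    hasCayleyWalk_mul_right (S := gens n hn) (s := (finRotate n)⁻¹) (by simp [gens])
      (finRotate n ^ (k + 1))

lemma hasCayleyWalk_swap_succ (k : ℕ) (h : k + 1 < n) :
    HasCayleyWalk (gens n hn) (finRotate n ^ k)
      (Equiv.swap ⟨k, by omega⟩ ⟨k + 1, h⟩ * finRotate n ^ k) 1 := by
  have hconj : finRotate n ^ k * delta n hn =
      Equiv.swap ⟨k, by omega⟩ ⟨k + 1, h⟩ * finRotate n ^ k := by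
    rw [delta, Equiv.mul_swap_eq_swap_mul]
    congr 2 <;> ext <;> rw [val_finRotate_pow] <;> simp only <;> omega
  rw [← hconj]
  exact hasCayleyWalk_mul_right (by simp [gens]) _

lemma hasCayleyWalk_swap_add (o d : ℕ) (h : o + (d + 1) < n) :
    HasCayleyWalk (gens n hn) (finRotate n ^ (o + d))
      (Equiv.swap ⟨o, by omega⟩ ⟨o + (d + 1), h⟩ * finRotate n ^ (o + d)) (4 * d + 1) := by
  induction d with
  | zero => exact hasCayleyWalk_swap_succ o h
  | succ d ih =>
    let σ : Equiv.Perm (Fin n) := Equiv.swap ⟨o + (d + 1), by omega⟩ ⟨o + (d + 1 + 1), h⟩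
    let τ : Equiv.Perm (Fin n) := Equiv.swap ⟨o, by omega⟩ ⟨o + (d + 1), by omega⟩
    have hconj : σ * τ * σ = Equiv.swap ⟨o, by omega⟩ ⟨o + (d + 1 + 1), h⟩ := by
      rw [Equiv.swap_mul_swap_mul_swap (by simp) (by simp), Equiv.swap_comm]
    have hσ : HasCayleyWalk (gens n hn) (finRotate n ^ (o + (d + 1)))
        (σ * finRotate n ^ (o + (d + 1))) 1 := hasCayleyWalk_swap_succ _ h
    have hτ : HasCayleyWalk (gens n hn) (finRotate n ^ (o + d))
        (τ * finRotate n ^ (o + d)) (4 * d + 1) := ih _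
    have hστ := (hσ.trans ((hasCayleyWalk_finRotate_pow_succ_symm _).mul_left σ)).trans
      (hτ.mul_left σ)
    rw [← mul_assoc] at hστ
    have hστσ := (hστ.trans ((hasCayleyWalk_finRotate_pow_succ _).mul_left (σ * τ))).trans
      (hσ.mul_left (σ * τ))
    rw [← mul_assoc, hconj] at hστσ
    convert hστσ using 1
    omega

lemma hasCayleyWalk_reverseIcc (o i : ℕ) (h : o + (i + 1) < n) :
    HasCayleyWalk (gens n hn) (finRotate n ^ (o + i))
      (reverseIcc ⟨o, by omega⟩ ⟨o + (i + 1), h⟩ * finRotate n ^ (o + (i + 1) / 2))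
      (i * (i + 3) + 1) := by
  induction i using Nat.twoStepInduction generalizing o with
  | zero | one =>
    rw [reverseIcc_eq_swap (by simp) (by simp)]
    exact hasCayleyWalk_swap_add o _ h
  | more i ih _ =>
    let σ : Equiv.Perm (Fin n) := Equiv.swap ⟨o, by omega⟩ ⟨o + (i + 2 + 1), h⟩
    have houter := (hasCayleyWalk_swap_add (hn := hn) o (i + 2) h).trans
      ((hasCayleyWalk_finRotate_pow_succ_symm (o + i + 1)).mul_left σ)
    have hinner := (ih (o + 1) (by omega)).mul_left σ
    rw [← mul_assoc, swap_mul_reverseIcc (by simp) rfl (by simp only; omega),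
      show o + 1 + i = o + i + 1 by omega,
      show o + 1 + (i + 1) / 2 = o + (i + 2 + 1) / 2 by omega] at hinner
    convert houter.trans hinner using 1
    ring

end UpperBound

section Averaging

open Finset

variable {α β : Type*} [LinearOrder α] (s : Finset α)

lemma sum_filter_lt_add (f : α → ℕ) :
    ∑ p ∈ s ×ˢ s with p.1 < p.2, (f p.1 + f p.2) = (#s - 1) * ∑ a ∈ s, f a := by
  calc ∑ p ∈ s ×ˢ s with p.1 < p.2, (f p.1 + f p.2)
      = ∑ a ∈ s, ∑ b ∈ s, ((if a < b then f a else 0) + if b < a then f a else 0) := by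
        simp only [sum_add_distrib, sum_filter, sum_product]
        congr 1
        exact sum_comm
    _ = ∑ a ∈ s, ∑ b ∈ s, if b ≠ a then f a else 0 := by
        refine sum_congr rfl fun a _ => sum_congr rfl fun b _ => ?_
        rcases lt_trichotomy a b with hab | rfl | hab <;> simp [*, ne_of_gt, ne_of_lt, not_lt_of_gt]
    _ = (#s - 1) * ∑ a ∈ s, f a := by
        rw [mul_sum]
        refine sum_congr rfl fun a ha => ?_
        rw [← sum_filter, sum_const, filter_ne', card_erase_of_mem ha, smul_eq_mul]

lemma choose_two_le_sum_natAbs_add (w : α → ℤ) (z : ℤ) :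
    (#s).choose 2 ≤ ∑ p ∈ s ×ˢ s with p.1 < p.2, (w p.2 - w p.1 - 1).natAbs +
      (#s - 1) * ∑ a ∈ s, (z - w a).natAbs := by
  rw [← card_product_filter_lt, card_eq_sum_ones, ← sum_filter_lt_add, ← sum_add_distrib]
  exact sum_le_sum fun p _ => by omega

lemma choose_two_le_sum_natAbs {t : Finset β} (hst : #s ≤ #t + 1) (w : α → ℤ) (v : β → ℤ) :
    (#s).choose 2 ≤ ∑ p ∈ s ×ˢ s with p.1 < p.2, (w p.2 - w p.1 - 1).natAbs +
      ∑ p ∈ s ×ˢ t, (v p.2 - w p.1).natAbs := by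
  rw [sum_product_right]
  set X := ∑ p ∈ s ×ˢ s with p.1 < p.2, (w p.2 - w p.1 - 1).natAbs
  set Y := ∑ c ∈ t, ∑ a ∈ s, (v c - w a).natAbs
  rcases t.eq_empty_or_nonempty with rfl | ht
  · rw [Nat.choose_eq_zero_of_lt (by rw [card_empty] at hst; omega)]
    exact Nat.zero_le _
  refine Nat.le_of_mul_le_mul_left ?_ ht.card_pos
  calc #t * (#s).choose 2
      = ∑ _c ∈ t, (#s).choose 2 := by rw [sum_const, smul_eq_mul]
    _ ≤ ∑ c ∈ t, (X + (#s - 1) * ∑ a ∈ s, (v c - w a).natAbs) :=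
        sum_le_sum fun c _ => choose_two_le_sum_natAbs_add s w (v c)
    _ = #t * X + (#s - 1) * Y := by rw [sum_add_distrib, sum_const, smul_eq_mul, ← mul_sum]
    _ ≤ #t * X + #t * Y := by gcongr; omega
    _ = #t * (X + Y) := (mul_add _ _ _).symm

end Averaging

lemma swap_lt_swap_iff_of_covBy {α : Type*} [LinearOrder α] {i k a b : α} (hik : i ⋖ k)
    (h : ¬(a = i ∧ b = k)) (h' : ¬(a = k ∧ b = i)) :
    Equiv.swap i k a < Equiv.swap i k b ↔ a < b := by
  have := hik.lt
  have := fun c => @hik.2 c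
  grind

section AffineLength

variable {n : ℕ}

/-- The Coxeter length, by Shi's formula, of the extended affine permutation
`a ↦ g⁻¹ a + n * w a`, whose inverse is a lift of `g`. -/
def affineLength (g : Equiv.Perm (Fin n)) (w : Fin n → ℤ) : ℕ :=
  ∑ p : Fin n × Fin n with p.1 < p.2,
    (w p.2 - w p.1 - if g⁻¹ p.2 < g⁻¹ p.1 then 1 else 0).natAbs

/-- The least Coxeter length of a lift of `g` to the extended affine symmetric group; the
potential that bounds word lengths from below. -/
noncomputable def minAffineLength (g : Equiv.Perm (Fin n)) : ℕ :=
  ⨅ w, affineLength g w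

lemma exists_affineLength_eq_minAffineLength (g : Equiv.Perm (Fin n)) :
    ∃ w, affineLength g w = minAffineLength g :=
  Nat.sInf_mem (Set.range_nonempty _)

lemma minAffineLength_le (g : Equiv.Perm (Fin n)) (w : Fin n → ℤ) :
    minAffineLength g ≤ affineLength g w :=
  ciInf_le (OrderBot.bddBelow _) w

lemma minAffineLength_one : minAffineLength (1 : Equiv.Perm (Fin n)) = 0 := by
  refine Nat.le_zero.1 ((minAffineLength_le 1 0).trans (Finset.sum_eq_zero fun p hp => ?_).le)
  simp [(Finset.mem_filter.1 hp).2.not_gt]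

lemma affineLength_mul_finRotate_inv (g : Equiv.Perm (Fin n)) (w : Fin n → ℤ) :
    affineLength (g * (finRotate n)⁻¹)
      (w + fun a => if (g⁻¹ a : ℕ) + 1 = n then 1 else 0) = affineLength g w := by
  refine Finset.sum_congr rfl fun p hp => ?_
  have : (g⁻¹ p.1 : ℕ) ≠ g⁻¹ p.2 :=
    Fin.val_ne_of_ne (g⁻¹.injective.ne (Finset.mem_filter.1 hp).2.ne)
  simp only [Pi.add_apply, mul_inv_rev, inv_inv, Equiv.Perm.mul_apply, Fin.lt_def, val_finRotate]
  split_ifs <;> omega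

lemma minAffineLength_mul_finRotate_inv (g : Equiv.Perm (Fin n)) :
    minAffineLength (g * (finRotate n)⁻¹) = minAffineLength g :=
  ((Equiv.addRight _).iInf_congr (affineLength_mul_finRotate_inv g)).symm

lemma minAffineLength_mul_finRotate (g : Equiv.Perm (Fin n)) :
    minAffineLength (g * finRotate n) = minAffineLength g := by
  rw [← minAffineLength_mul_finRotate_inv, mul_inv_cancel_right]

lemma minAffineLength_mul_finRotate_pow (g : Equiv.Perm (Fin n)) (k : ℕ) :
    minAffineLength (g * finRotate n ^ k) = minAffineLength g := by
  induction k with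
  | zero => rw [pow_zero, mul_one]
  | succ k ih => rw [pow_succ, ← mul_assoc, minAffineLength_mul_finRotate, ih]

lemma affineLength_mul_swap_le {i k : Fin n} (hik : i ⋖ k) (g : Equiv.Perm (Fin n))
    (w : Fin n → ℤ) : affineLength (g * Equiv.swap i k) w ≤ affineLength g w + 1 := by
  have hp₀ : (min (g i) (g k), max (g i) (g k)) ∈
      Finset.univ.filter fun p : Fin n × Fin n => p.1 < p.2 := by
    simpa using hik.lt.ne'
  rw [affineLength, affineLength, ← Finset.add_sum_erase _ _ hp₀, ← Finset.add_sum_erase _ _ hp₀,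
    add_right_comm]
  refine add_le_add (by split_ifs <;> omega) (Finset.sum_congr rfl fun p hp => ?_).le
  obtain ⟨hne, hlt⟩ : p ≠ _ ∧ p.1 < p.2 := by simpa using hp
  have hiff : (g * Equiv.swap i k)⁻¹ p.2 < (g * Equiv.swap i k)⁻¹ p.1 ↔ g⁻¹ p.2 < g⁻¹ p.1 := by
    rw [mul_inv_rev, Equiv.swap_inv]
    apply swap_lt_swap_iff_of_covBy hik <;> rintro ⟨h₁, h₂⟩ <;>
      rw [Equiv.Perm.inv_eq_iff_eq] at h₁ h₂ <;> apply hne <;> rw [← h₁, ← h₂] <;>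
      simp [hlt.le]
  simp only [hiff]

lemma minAffineLength_mul_swap_le {i k : Fin n} (hik : i ⋖ k) (g : Equiv.Perm (Fin n)) :
    minAffineLength (g * Equiv.swap i k) ≤ minAffineLength g + 1 := by
  obtain ⟨w, hw⟩ := exists_affineLength_eq_minAffineLength g
  exact hw ▸ (minAffineLength_le _ w).trans (affineLength_mul_swap_le hik g w)

lemma minAffineLength_mul_delta_le (hn : 2 ≤ n) (g : Equiv.Perm (Fin n)) :
    minAffineLength (g * delta n hn) ≤ minAffineLength g + 1 :=
  minAffineLength_mul_swap_le (Fin.covBy_iff.2 (by simp)) g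

lemma two_mul_minAffineLength_mul_prod_le (hn : 2 ≤ n) (g : Equiv.Perm (Fin n))
    (l : List (Equiv.Perm (Fin n))) (hl : ∀ x ∈ l, x ∈ gens n hn) :
    2 * minAffineLength (g * l.prod) ≤ 2 * minAffineLength g + l.length + 1 ∧
      2 * minAffineLength (g * l.prod * delta n hn) ≤ 2 * minAffineLength g + l.length + 2 := by
  induction l using List.reverseRecOn with
  | nil =>
    have := minAffineLength_mul_delta_le hn g
    simp only [List.prod_nil, mul_one, List.length_nil]
    omega
  | append_singleton l x ih =>
    obtain ⟨ih, ihδ⟩ := ih fun y hy => hl y (List.mem_append_left _ hy)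
    have hx : x ∈ gens n hn := hl x (by simp)
    rw [List.prod_append, List.prod_singleton, ← mul_assoc, List.length_append,
      List.length_singleton]
    have hδ := minAffineLength_mul_delta_le hn (g * l.prod * x)
    rcases hx with rfl | rfl | rfl
    -- Since `δ² = 1`, appending `δ` turns the second bound for `l` into the
    -- first one for `l ++ [δ]` and vice versa: this is why the two are proved together.
    · have hδδ : g * l.prod * delta n hn * delta n hn = g * l.prod :=
        Equiv.mul_swap_mul_self _ _ _
      rw [hδδ]
      omega
    · rw [minAffineLength_mul_finRotate] at hδ ⊢
      omega
    · rw [minAffineLength_mul_finRotate_inv] at hδ ⊢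
      omega

lemma HasCayleyWalk.two_mul_minAffineLength_le {hn : 2 ≤ n} {g h : Equiv.Perm (Fin n)} {d : ℕ}
    (hw : HasCayleyWalk (gens n hn) g h d) :
    2 * minAffineLength h ≤ 2 * minAffineLength g + d + 1 := by
  obtain ⟨l, hl, rfl, rfl⟩ := hw
  exact (two_mul_minAffineLength_mul_prod_le hn g l hl).1

lemma affineLength_reverseIcc_zero (b : Fin n) (w : Fin n → ℤ) :
    affineLength (reverseIcc ⟨0, b.pos⟩ b) w =
      ∑ p : Fin n × Fin n with p.1 < p.2, (w p.2 - w p.1 - if p.2 ≤ b then 1 else 0).natAbs := by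
  refine Finset.sum_congr rfl fun p hp => ?_
  have hlt : p.1 < p.2 := (Finset.mem_filter.1 hp).2
  simp only [reverseIcc_inv, reverseIcc_lt_reverseIcc_iff hlt, Fin.le_def, Nat.zero_le, true_and]

lemma choose_two_le_affineLength_reverseIcc_zero {b : Fin n} (hb : 2 * (b : ℕ) + 1 ≤ n)
    (w : Fin n → ℤ) : ((b : ℕ) + 1).choose 2 ≤ affineLength (reverseIcc ⟨0, b.pos⟩ b) w := by
  let s : Finset (Fin n) := Finset.Iic b
  have hs : s.card = b + 1 := Fin.card_Iic b
  have hst : s.card ≤ sᶜ.card + 1 := by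
    rw [Finset.card_compl, hs, Fintype.card_fin]
    omega
  have hdisj : Disjoint ((s ×ˢ s).filter fun p => p.1 < p.2) (s ×ˢ sᶜ) := by
    simp +contextual [Finset.disjoint_left]
  have hsub : ((s ×ˢ s).filter fun p => p.1 < p.2) ∪ s ×ˢ sᶜ ⊆
      Finset.univ.filter fun p : Fin n × Fin n => p.1 < p.2 := by
    refine Finset.union_subset (Finset.filter_subset_filter _ (Finset.subset_univ _)) fun p hp => ?_
    have hp' : p.1 ≤ b ∧ b < p.2 := by simpa [s] using hp
    simpa using hp'.1.trans_lt hp'.2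
  rw [affineLength_reverseIcc_zero, ← hs]
  calc s.card.choose 2
      ≤ ∑ p ∈ s ×ˢ s with p.1 < p.2, (w p.2 - w p.1 - 1).natAbs +
          ∑ p ∈ s ×ˢ sᶜ, (w p.2 - w p.1).natAbs := choose_two_le_sum_natAbs s hst w w
    _ = ∑ p ∈ ((s ×ˢ s).filter fun p => p.1 < p.2) ∪ s ×ˢ sᶜ,
          (w p.2 - w p.1 - if p.2 ≤ b then 1 else 0).natAbs := by
        rw [Finset.sum_union hdisj]
        congr 1 <;> refine Finset.sum_congr rfl fun p hp => ?_
        · rw [if_pos (by simp_all [s])]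
        · rw [if_neg (by simp_all [s]), sub_zero]
    _ ≤ ∑ p : Fin n × Fin n with p.1 < p.2, (w p.2 - w p.1 - if p.2 ≤ b then 1 else 0).natAbs :=
        Finset.sum_le_sum_of_subset hsub

lemma choose_two_le_minAffineLength_reverseIcc_zero {b : Fin n} (hb : 2 * (b : ℕ) + 1 ≤ n) :
    ((b : ℕ) + 1).choose 2 ≤ minAffineLength (reverseIcc ⟨0, b.pos⟩ b) :=
  le_ciInf (choose_two_le_affineLength_reverseIcc_zero hb)

lemma mul_le_of_hasCayleyWalk_reverseIcc_zero {hn : 2 ≤ n} {b : Fin n}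
    (hb : 2 * (b : ℕ) + 1 ≤ n) {k m d : ℕ}
    (hw : HasCayleyWalk (gens n hn) (finRotate n ^ k)
      (reverseIcc ⟨0, b.pos⟩ b * finRotate n ^ m) d) :
    ((b : ℕ) + 1) * b ≤ d + 1 := by
  have hsource : minAffineLength (finRotate n ^ k) = 0 := by
    rw [← one_mul (finRotate n ^ k), minAffineLength_mul_finRotate_pow, minAffineLength_one]
  calc ((b : ℕ) + 1) * b
      = 2 * ((b : ℕ) + 1).choose 2 := by
        rw [Nat.choose_two_right, Nat.mul_div_cancel' (Nat.even_mul_pred_self _).two_dvd,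
          Nat.add_sub_cancel]
    _ ≤ 2 * minAffineLength (reverseIcc ⟨0, b.pos⟩ b * finRotate n ^ m) := by
        rw [minAffineLength_mul_finRotate_pow]
        exact Nat.mul_le_mul_left 2 (choose_two_le_minAffineLength_reverseIcc_zero hb)
    _ ≤ 2 * minAffineLength (finRotate n ^ k) + d + 1 := hw.two_mul_minAffineLength_le
    _ = d + 1 := by rw [hsource, mul_zero, zero_add]

end AffineLength

/-- For `n ≥ 3`, `2 ≤ j ≤ ⌈n/2⌉`, any `π ∈ S_n`, and `ξ` the
permutation reversing the first `j` entries of `π`'s one-line notation, the word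
metric with respect to `{(1 2), r, r⁻¹}` satisfies
`dist(π r^(j-2), ξ r^(⌈j/2⌉ - 1)) = j(j-1) - 1`. -/
theorem stmt15 (n : ℕ) (hn : 3 ≤ n) (j : ℕ) (hj1 : 2 ≤ j) (hj2 : j ≤ (n + 1) / 2)
    (π ξ : Equiv.Perm (Fin n))
    (hξ : ∀ p : Fin n, ξ p =
      if h : (p : ℕ) < j then π ⟨j - 1 - (p : ℕ), by omega⟩ else π p) :
    IsMinWordLen n (by omega)
      ((π * (finRotate n) ^ (j - 2))⁻¹ * (ξ * (finRotate n) ^ ((j + 1) / 2 - 1)))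
      (j * (j - 1) - 1) := by
  obtain ⟨i, rfl⟩ := Nat.exists_eq_add_of_le' hj1
  have hd : (i + 2) * (i + 2 - 1) = i * (i + 3) + 1 + 1 := by
    rw [Nat.add_sub_assoc one_le_two]
    ring
  have hm : (i + 2 + 1) / 2 - 1 = (i + 1) / 2 := by omega
  have hξ_eq : ξ = π * reverseIcc ⟨0, by omega⟩ ⟨i + 1, by omega⟩ :=
    eq_mul_reverseIcc (by omega) (by omega) hξ
  rw [hξ_eq, hd, hm, Nat.add_sub_cancel, Nat.add_sub_cancel, mul_assoc, isMinWordLen_inv_mul_iff]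
  simp only [hasCayleyWalk_mul_left_iff]
  refine ⟨by simpa only [zero_add] using hasCayleyWalk_reverseIcc 0 i (by omega), fun e hw => ?_⟩
  have hlower : (i + 2) * (i + 1) ≤ e + 1 :=
    mul_le_of_hasCayleyWalk_reverseIcc_zero (by simp only; omega) hw
  linarith
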